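/- Let G be an interval graph with interval representation I and right-endpoint ordering σ, and let P=(P_1,u,v,w,P_2) be a normal path of G in which u,v,w are consecutive vertices. If v <_σ u, then v <_σ w. -/

import Mathlib

/-- `p` is a normal path of the interval graph `G` with right-endpoint function `r`:
it is a path (consecutive vertices adjacent, no repeated vertex), its first vertex is
the leftmost vertex of the path in the right-endpoint ordering, and each vertex `p[i+1]`
is the leftmost (in the right-endpoint ordering) vertex among the later path vertices
that are adjacent to `p[i]`. -/
def IsNormalPath {V : Type*} (G : SimpleGraph V) (r : V → ℝ) (p : List V) : Prop :=
  p.Chain' G.Adj ∧ p.Nodup ∧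
  (∀ (h : p ≠ []), ∀ v ∈ p, r (p.head h) ≤ r v) ∧
  (∀ i j : ℕ, ∀ (hi : i + 1 < p.length) (hj : j < p.length), i + 1 ≤ j →
    G.Adj (p[i]'(by omega)) (p[j]'hj) → r (p[i+1]'hi) ≤ r (p[j]'hj))

/-- `u` occurs strictly before `w` on the list `p`. -/
def Before {V : Type*} (p : List V) (u w : V) : Prop :=
  ∃ q1 q2 q3 : List V, p = q1 ++ u :: q2 ++ w :: q3

/-!
Let `c` come after `a` on a normal path. Then `a` lies left of `c` or is adjacent to it: this is
clear for the first vertex, and it passes from each vertex `b` to its successor `a`. If `b` is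
adjacent to `c`, then `a` was chosen as the leftmost candidate, `c` being another one. If `b` lies
left of `c` and `a` right of `c`, then the edge `ba` spans `c`, so `a` is adjacent to `c`.

Consequently, when the path steps leftwards from `u` to `v`, each later vertex either lies right
of `u`, hence of `v`, or was a candidate at `u`, where `v` was preferred to it.
-/

/-- An interval ordering of a graph, presented by a position function `r`: whenever `x` is adjacent
to a vertex `z` on its right, so is every vertex between them. It isolates what normal paths
need to know about a right-endpoint ordering. Ties in `r` are allowed, and a vertex tied with `x`
counts as lying between `x` and `z`. -/
def IsIntervalOrdering {V α : Type*} [Preorder α] (G : SimpleGraph V) (r : V → α) : Prop :=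
  ∀ ⦃x y z : V⦄, r x ≤ r y → r y < r z → G.Adj x z → G.Adj y z

theorem isIntervalOrdering_of_adj_iff {V α : Type*} [Preorder α] {G : SimpleGraph V}
    {l r : V → α} (hlr : ∀ v, l v ≤ r v)
    (hadj : ∀ u v, G.Adj u v ↔ u ≠ v ∧ l u ≤ r v ∧ l v ≤ r u) : IsIntervalOrdering G r := by
  intro x y z hxy hyz hxz
  have hzx : l z ≤ r x := ((hadj x z).mp hxz).2.2
  exact (hadj y z).mpr ⟨ne_of_apply_ne r hyz.ne, (hlr y).trans hyz.le, hzx.trans hxy⟩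

section NormalPath

variable {V : Type*} {G : SimpleGraph V} {r : V → ℝ} {p q : List V} {a b c : V}

theorem IsNormalPath.adj (h : IsNormalPath G r (p ++ a :: b :: q)) : G.Adj a b :=
  (List.isChain_append_cons_cons.mp h.1).2.1

theorem IsNormalPath.le_of_adj (h : IsNormalPath G r (p ++ a :: b :: q)) (hc : c ∈ b :: q)
    (hac : G.Adj a c) : r b ≤ r c := by
  obtain ⟨k, hk, rfl⟩ := List.mem_iff_getElem.mp hc
  have hleft := h.2.2.2 p.length (p.length + (k + 1)) (by simp) (by simpa using hk) (by omega)
  simpa [hac] using hleft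

theorem IsNormalPath.le_or_adj (hr : IsIntervalOrdering G r)
    (h : IsNormalPath G r (p ++ a :: q)) (hc : c ∈ q) : r a ≤ r c ∨ G.Adj a c := by
  induction p using List.reverseRecOn generalizing a q with
  | nil => exact .inl (h.2.2.1 (List.cons_ne_nil a q) c (List.mem_cons_of_mem a hc))
  | append_singleton p b ih =>
    rw [List.append_assoc, List.singleton_append] at h
    have hc' : c ∈ a :: q := List.mem_cons_of_mem a hc
    rcases ih h hc' with hbc | hbc
    · exact (le_or_gt (r a) (r c)).imp_right fun hca ↦ (hr hbc hca h.adj).symm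
    · exact .inl (h.le_of_adj hc' hbc)

theorem IsNormalPath.le_of_lt (hr : IsIntervalOrdering G r)
    (h : IsNormalPath G r (p ++ a :: b :: q)) (hba : r b < r a) (hc : c ∈ b :: q) :
    r b ≤ r c :=
  (h.le_or_adj hr hc).elim hba.le.trans (h.le_of_adj hc)

theorem IsNormalPath.ne (h : IsNormalPath G r (p ++ b :: q)) (hc : c ∈ q) : b ≠ c := by
  rintro rfl
  exact (List.nodup_cons.mp h.2.1.of_append_right).1 hc

end NormalPath

theorem stmt6_general {V : Type*} {G : SimpleGraph V} {r : V → ℝ} (hr : IsIntervalOrdering G r)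
    (hinj : Function.Injective r) {p q : List V} {u v w : V}
    (hnp : IsNormalPath G r (p ++ u :: v :: q)) (hvu : r v < r u) (hw : w ∈ q) : r v < r w := by
  have hle : r v ≤ r w := hnp.le_of_lt hr hvu (List.mem_cons_of_mem v hw)
  have hne : v ≠ w := by
    rw [List.append_cons] at hnp
    exact hnp.ne hw
  exact hle.lt_of_ne (hinj.ne hne)

theorem stmt6 {V : Type*} [Fintype V]
    (G : SimpleGraph V) (l r : V → ℝ)
    (hlr : ∀ v : V, l v < r v)
    (hinjl : Function.Injective l) (hinjr : Function.Injective r)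
    (hlrne : ∀ u v : V, l u ≠ r v)
    (hadj : ∀ u v : V, G.Adj u v ↔ u ≠ v ∧ l u ≤ r v ∧ l v ≤ r u)
    (p1 p2 : List V) (u v w : V)
    (hnp : IsNormalPath G r (p1 ++ u :: v :: w :: p2))
    (hsigma : r v < r u) :
    r v < r w := by
  have hr : IsIntervalOrdering G r := isIntervalOrdering_of_adj_iff (fun x ↦ (hlr x).le) hadj
  exact stmt6_general hr hinjr hnp hsigma List.mem_cons_self
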